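/- arXiv:1011.3322 — 4 statements merged into one kernel-verified Lean document; each statement's English description precedes it below -/
import Mathlib

section
/- Let C be a fiat category and let F and G be indecomposable 1-morphisms of C. Then F <=_LR G if and only if there exists an indecomposable 1-morphism L with F <=_R L and L <=_L G, and also if and only if there exists an indecomposable 1-morphism L' with F <=_L L' and L' <=_R G. In other words, as relations on indecomposable 1-morphisms, <=_LR equals the composite relation <=_R followed by <=_L, and also equals <=_L followed by <=_R. -/
open CategoryTheory CategoryTheory.Limits

universe w v u

attribute [local instance] CategoryTheory.Limits.hasBinaryBiproducts_of_finite_biproducts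

namespace CellTwoRep

variable {C : Type u} [Bicategory.{w, v} C]

/-- `G` is a retract (direct summand) of `F` in a hom-category of the bicategory `C`. -/
def IsSummand {a b : C} (G F : a ⟶ b) : Prop :=
  ∃ (ι : G ⟶ F) (π : F ⟶ G), ι ≫ π = 𝟙 G

/-- Cast a 1-morphism along equalities of objects. -/
def castHom {a a' b b' : C} (h₁ : a = a') (h₂ : b = b') (f : a ⟶ b) : a' ⟶ b' :=
  h₁ ▸ h₂ ▸ f

section Indec

variable [∀ a b : C, Preadditive (a ⟶ b)] [∀ a b : C, HasFiniteBiproducts (a ⟶ b)]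

/-- An indecomposable 1-morphism: nonzero, and any decomposition as a biproduct is trivial. -/
def Indec {a b : C} (F : a ⟶ b) : Prop :=
  ¬ IsZero F ∧ ∀ G H : a ⟶ b, Nonempty (F ≅ G ⊞ H) → IsZero G ∨ IsZero H

end Indec

/-- A 1-morphism of `C` together with its endpoints. -/
structure OneMor (C : Type u) [Bicategory.{w, v} C] where
  src : C
  tgt : C
  mor : src ⟶ tgt

/-- right preorder: `F ≤_R G` iff `G` is a direct summand of `H ∘ F` for some `H`. -/
def leR (F G : OneMor C) : Prop :=
  ∃ (h : F.src = G.src) (H : F.tgt ⟶ G.tgt),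
    IsSummand G.mor (castHom h rfl F.mor ≫ H)

/-- left preorder: `F ≤_L G` iff `G` is a direct summand of `F ∘ H` for some `H`. -/
def leL (F G : OneMor C) : Prop :=
  ∃ (h : F.tgt = G.tgt) (H : G.src ⟶ F.src),
    IsSummand G.mor (H ≫ castHom rfl h F.mor)

/-- two-sided preorder: `F ≤_LR G` iff `G` is a direct summand of `H₂ ∘ F ∘ H₁`. -/
def leLR (F G : OneMor C) : Prop :=
  ∃ (H₁ : G.src ⟶ F.src) (H₂ : F.tgt ⟶ G.tgt),
    IsSummand G.mor (H₁ ≫ F.mor ≫ H₂)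

def simR (F G : OneMor C) : Prop := leR F G ∧ leR G F
def simL (F G : OneMor C) : Prop := leL F G ∧ leL G F
def simLR (F G : OneMor C) : Prop := leLR F G ∧ leLR G F

/-- Isomorphism of 1-morphisms (with possibly different, but equal, endpoints). -/
def IsoM (F G : OneMor C) : Prop :=
  ∃ (h₁ : F.src = G.src) (h₂ : F.tgt = G.tgt), Nonempty (castHom h₁ h₂ F.mor ≅ G.mor)

section Cells

variable [∀ a b : C, Preadditive (a ⟶ b)] [∀ a b : C, HasFiniteBiproducts (a ⟶ b)]

def IndecM (F : OneMor C) : Prop := Indec F.mor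

/-- A right cell: the `∼_R`-equivalence class of some indecomposable 1-morphism. -/
def IsRightCell (R : Set (OneMor C)) : Prop :=
  ∃ F : OneMor C, IndecM F ∧ R = {G | IndecM G ∧ simR F G}

def IsLeftCell (L : Set (OneMor C)) : Prop :=
  ∃ F : OneMor C, IndecM F ∧ L = {G | IndecM G ∧ simL F G}

def IsTwoSidedCell (Q : Set (OneMor C)) : Prop :=
  ∃ F : OneMor C, IndecM F ∧ Q = {G | IndecM G ∧ simLR F G}

/-- The right order on cells. -/
def cellLeR (R R' : Set (OneMor C)) : Prop := ∃ F ∈ R, ∃ G ∈ R', leR F G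

/-- The left order on cells. -/
def cellLeL (L L' : Set (OneMor C)) : Prop := ∃ F ∈ L, ∃ G ∈ L', leL F G

/-- A regular two-sided cell: distinct right cells inside it are incomparable for `≤_R`. -/
def IsRegular (Q : Set (OneMor C)) : Prop :=
  IsTwoSidedCell Q ∧ ∀ R R' : Set (OneMor C), IsRightCell R → IsRightCell R' →
    R ⊆ Q → R' ⊆ Q → R ≠ R' → ¬ cellLeR R R' ∧ ¬ cellLeR R' R

/-- A strongly regular two-sided cell: regular, and every left cell meets every right cell
inside it in exactly one isomorphism class. -/
def IsStronglyRegular (Q : Set (OneMor C)) : Prop :=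
  IsRegular Q ∧ ∀ L R : Set (OneMor C), IsLeftCell L → IsRightCell R → L ⊆ Q → R ⊆ Q →
    ∃ F, F ∈ L ∩ R ∧ ∀ G, G ∈ L ∩ R → IsoM F G

end Cells

/-- All the axioms of a fiat (`k`-finitary with involution and adjunctions) 2-category,
on top of a strict bicategory whose hom-categories are additive and `k`-linear. -/
structure FiatAxioms (k : Type*) [Field k] [IsAlgClosed k]
    (C : Type u) [Bicategory.{w, v} C] [Bicategory.Strict C]
    [∀ a b : C, Preadditive (a ⟶ b)] [∀ a b : C, HasFiniteBiproducts (a ⟶ b)]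
    [∀ a b : C, Linear k (a ⟶ b)] : Type (max u v w) where
  /-- finitely many objects -/
  finObj : Finite C
  /-- each hom-category is idempotent complete -/
  idemComplete : ∀ a b : C, IsIdempotentComplete (a ⟶ b)
  /-- finite-dimensional spaces of 2-morphisms -/
  finDim : ∀ (a b : C) (f g : a ⟶ b), FiniteDimensional k (f ⟶ g)
  /-- finitely many isomorphism classes of indecomposable 1-morphisms -/
  finIndec : ∀ a b : C, ∃ (n : ℕ) (ι : Fin n → (a ⟶ b)),
      ∀ F : a ⟶ b, Indec F → ∃ i, Nonempty (F ≅ ι i)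
  /-- each identity 1-morphism is indecomposable -/
  idIndec : ∀ a : C, Indec (𝟙 a)
  /-- horizontal composition is additive in the second variable -/
  whiskerLeft_add : ∀ {a b c : C} (f : a ⟶ b) {g h : b ⟶ c} (η θ : g ⟶ h),
      Bicategory.whiskerLeft f (η + θ) =
        Bicategory.whiskerLeft f η + Bicategory.whiskerLeft f θ
  /-- horizontal composition is additive in the first variable -/
  whiskerRight_add : ∀ {a b c : C} {f g : a ⟶ b} (η θ : f ⟶ g) (h : b ⟶ c),
      Bicategory.whiskerRight (η + θ) h =
        Bicategory.whiskerRight η h + Bicategory.whiskerRight θ h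
  /-- the involution on 1-morphisms -/
  star : ∀ {a b : C}, (a ⟶ b) → (b ⟶ a)
  /-- the involution on 2-morphisms -/
  star2 : ∀ {a b : C} {f g : a ⟶ b}, (f ⟶ g) → (star f ⟶ star g)
  star2_id : ∀ {a b : C} (f : a ⟶ b), star2 (𝟙 f) = 𝟙 (star f)
  star2_comp : ∀ {a b : C} {f g h : a ⟶ b} (η : f ⟶ g) (θ : g ⟶ h),
      star2 (η ≫ θ) = star2 η ≫ star2 θ
  /-- the involution is a weak anti-homomorphism -/
  starComp : ∀ {a b c : C} (f : a ⟶ b) (g : b ⟶ c),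
      Nonempty (star (f ≫ g) ≅ star g ≫ star f)
  starId : ∀ a : C, Nonempty (star (𝟙 a) ≅ 𝟙 a)
  /-- the involution is weakly involutive -/
  starStar : ∀ {a b : C} (f : a ⟶ b), Nonempty (star (star f) ≅ f)
  /-- adjunctions: every 1-morphism `f` is left adjoint to `star f` -/
  adj : ∀ {a b : C} (f : a ⟶ b), Nonempty (Bicategory.Adjunction f (star f))

section Algebra

/-- In a finite-dimensional algebra whose only idempotents are `0` and `1`, for every `x`
either `x` or `1 - x` is a unit. -/
theorem isUnit_or_isUnit_one_sub_of_trivial_idempotents (k : Type*) {A : Type*} [Field k]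
    [Ring A] [Algebra k A] [FiniteDimensional k A]
    (h : ∀ e : A, IsIdempotentElem e → e = 0 ∨ e = 1) (x : A) :
    IsUnit x ∨ IsUnit (1 - x) := by
  let B := Algebra.adjoin k {x}
  have : IsMulCommutative B := Algebra.isMulCommutative_adjoin k (by
    intro a ha b hb
    rw [Set.mem_singleton_iff.1 ha, Set.mem_singleton_iff.1 hb])
  have : FiniteDimensional k B := inferInstanceAs (FiniteDimensional k B.toSubmodule)
  have : IsArtinianRing B := IsArtinianRing.of_finite k B
  let z : B := ⟨x, Algebra.subset_adjoin rfl⟩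
  obtain ⟨n, y, hy⟩ := IsArtinian.exists_pow_succ_smul_dvd z (1 : B)
  have hy : z ^ n * (z * y) = z ^ n := by
    simpa [pow_succ, mul_assoc] using hy
  have hpow (m : ℕ) : z ^ n * (z * y) ^ m = z ^ n := by
    induction m with
    | zero => simp
    | succ m ih => rw [pow_succ, ← mul_assoc, ih, hy]
  have hidem : IsIdempotentElem (((z * y) ^ n : B) : A) := by
    have hB : (z * y) ^ n * (z * y) ^ n = (z * y) ^ n := by
      calc (z * y) ^ n * (z * y) ^ n = y ^ n * (z ^ n * (z * y) ^ n) := by ring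
        _ = (z * y) ^ n := by rw [hpow]; ring
    exact congrArg Subtype.val hB
  rcases h _ hidem with h0 | h1
  · right
    have h0 : (z * y) ^ n = 0 := Subtype.ext h0
    have hz : z ^ n = 0 := by rw [← hpow n, h0, mul_zero]
    exact IsNilpotent.isUnit_one_sub ⟨n, congrArg Subtype.val hz⟩
  · left
    rcases n.eq_zero_or_pos with rfl | hn
    · have hzy : z * y = 1 := by simpa using hy
      exact (IsUnit.of_mul_eq_one y hzy).map B.val
    · have h1 : (z * y) ^ n = 1 := Subtype.ext h1
      have hu : IsUnit (z * y) := (isUnit_pow_iff hn.ne').1 (h1 ▸ isUnit_one)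
      exact (isUnit_of_mul_isUnit_left hu).map B.val

end Algebra

section Additive

/-- If an isomorphism of `G` factors through `Y`, then `G` is a retract of `Y`. -/
theorem nonempty_retract_of_isIso_comp {E : Type*} [Category* E] {G Y : E} (f : G ⟶ Y) (g : Y ⟶ G) [IsIso (f ≫ g)] :
    Nonempty (Retract G Y) :=
  ⟨{ i := f, r := g ≫ inv (f ≫ g), retract := by rw [← Category.assoc, IsIso.hom_inv_id] }⟩

variable {D E : Type*} [Category* D] [Category* E] [Preadditive D] [Preadditive E]

/-- In an idempotent complete category, the endomorphisms of an indecomposable object have only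
trivial idempotents. -/
theorem eq_zero_or_eq_id_of_indecomposable [HasBinaryBiproducts D] [IsIdempotentComplete D]
    {X : D} (hX : Indecomposable X) (e : X ⟶ X) (he : e ≫ e = e) : e = 0 ∨ e = 𝟙 X := by
  obtain ⟨Y, i, p, hip, hpi⟩ := IsIdempotentComplete.idempotents_split X e he
  obtain ⟨Z, j, q, hjq, hqj⟩ := IsIdempotentComplete.idempotents_split X (𝟙 X - e)
    (by simp [he])
  have hYZ : i ≫ q = 0 := by
    have : p ≫ (i ≫ q) ≫ j = 0 := by
      rw [Category.assoc, hqj, reassoc_of% hpi]; simp [he]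
    calc i ≫ q = (i ≫ p) ≫ (i ≫ q) ≫ (j ≫ q) := by rw [hip, hjq]; simp
      _ = i ≫ (p ≫ (i ≫ q) ≫ j) ≫ q := by simp
      _ = 0 := by rw [this]; simp
  have hZY : j ≫ p = 0 := by
    have : q ≫ (j ≫ p) ≫ i = 0 := by
      rw [Category.assoc, hpi, reassoc_of% hqj]; simp [he]
    calc j ≫ p = (j ≫ q) ≫ (j ≫ p) ≫ (i ≫ p) := by rw [hip, hjq]; simp
      _ = j ≫ (q ≫ (j ≫ p) ≫ i) ≫ p := by simp
      _ = 0 := by rw [this]; simp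
  let b : BinaryBicone Y Z :=
    { pt := X, fst := p, snd := q, inl := i, inr := j
      inl_fst := hip, inl_snd := hYZ, inr_fst := hZY, inr_snd := hjq }
  have hb : b.IsBilimit := isBinaryBilimitOfTotal b (by
    change p ≫ i + q ≫ j = 𝟙 X
    rw [hpi, hqj]; exact add_sub_cancel _ _)
  rcases hX.2 Y Z (biprod.uniqueUpToIso Y Z hb) with h | h
  · left
    rw [← hpi, h.eq_of_src i 0, comp_zero]
  · right
    rw [h.eq_of_src j 0, comp_zero] at hqj
    exact (sub_eq_zero.1 hqj.symm).symm

/-- A nonzero complement strictly increases the dimension of the endomorphism algebra. -/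
theorem finrank_end_lt_of_biprod_iso (k : Type*) [Field k] [Linear k D] {X A B : D}
    [HasBinaryBiproduct A B] [FiniteDimensional k (X ⟶ X)]
    (φ : X ≅ A ⊞ B) (hB : ¬ IsZero B) :
    Module.finrank k (A ⟶ A) < Module.finrank k (X ⟶ X) := by
  let i : A ⟶ X := biprod.inl ≫ φ.inv
  let p : X ⟶ A := φ.hom ≫ biprod.fst
  let j : B ⟶ X := biprod.inr ≫ φ.inv
  let q : X ⟶ B := φ.hom ≫ biprod.snd
  have hip : i ≫ p = 𝟙 A := by simp [i, p]
  have hiq : i ≫ q = 0 := by simp [i, q]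
  have hjq : j ≫ q = 𝟙 B := by simp [j, q]
  let T : (A ⟶ A) →ₗ[k] (X ⟶ X) := Linear.rightComp k X i ∘ₗ Linear.leftComp k A p
  have hT : ∀ f, T f = (p ≫ f) ≫ i := fun f => rfl
  have hinj : Function.Injective T := by
    intro f g hfg
    have := congrArg (fun t => i ≫ t ≫ p) hfg
    simpa [hT, hip, reassoc_of% hip] using this
  have hne : LinearMap.range T ≠ ⊤ := by
    refine fun htop => hB ?_
    obtain ⟨f, hf⟩ : q ≫ j ∈ LinearMap.range T := htop ▸ Submodule.mem_top
    rw [IsZero.iff_id_eq_zero]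
    calc 𝟙 B = j ≫ (q ≫ j) ≫ q := by simp [hjq]
      _ = 0 := by rw [← hf, hT]; simp [hiq]
  calc Module.finrank k (A ⟶ A) = Module.finrank k (LinearMap.range T) :=
        (LinearMap.finrank_range_of_inj hinj).symm
    _ < Module.finrank k (X ⟶ X) := Submodule.finrank_lt hne

/-- Let `Φ` be an additive functor. An object `G` with local endomorphism ring which is a retract
of `Φ.obj X` is already a retract of `Φ.obj L` for an indecomposable retract `L` of `X`. -/
theorem exists_indecomposable_retract (k : Type*) [Field k] [Linear k D] [HasBinaryBiproducts D]
    [∀ X Y : D, FiniteDimensional k (X ⟶ Y)] (Φ : D ⥤ E) [Φ.Additive] {G : E}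
    (hG : ¬ IsZero G) (hloc : ∀ x : End G, IsUnit x ∨ IsUnit (1 - x)) (X : D)
    (r : Retract G (Φ.obj X)) :
    ∃ L : D, Indecomposable L ∧ Nonempty (Retract L X) ∧ Nonempty (Retract G (Φ.obj L)) := by
  induction hn : Module.finrank k (X ⟶ X) using Nat.strong_induction_on generalizing X with
  | _ n ih =>
    subst hn
    by_cases hX : Indecomposable X
    · exact ⟨X, hX, ⟨Retract.refl X⟩, ⟨r⟩⟩
    have hX0 : ¬ IsZero X := by
      intro h0
      refine hG ((IsZero.iff_id_eq_zero G).2 ?_)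
      rw [← r.retract, (Φ.map_isZero h0).eq_of_tgt r.i 0, zero_comp]
    simp only [Indecomposable, hX0, not_false_eq_true, true_and, not_forall, not_or] at hX
    obtain ⟨A, B, φ, hA, hB⟩ := hX
    let rA : Retract A X := { i := biprod.inl ≫ φ.inv, r := φ.hom ≫ biprod.fst }
    let rB : Retract B X := { i := biprod.inr ≫ φ.inv, r := φ.hom ≫ biprod.snd }
    have htot : rA.r ≫ rA.i + rB.r ≫ rB.i = 𝟙 X := by
      calc rA.r ≫ rA.i + rB.r ≫ rB.i
          = φ.hom ≫ (biprod.fst ≫ biprod.inl + biprod.snd ≫ biprod.inr) ≫ φ.inv := by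
            simp [rA, rB, -biprod.total]
        _ = 𝟙 X := by rw [biprod.total]; simp
    let x : End G := (r.i ≫ Φ.map rA.r) ≫ (Φ.map rA.i ≫ r.r)
    let y : End G := (r.i ≫ Φ.map rB.r) ≫ (Φ.map rB.i ≫ r.r)
    have hxy : x + y = 1 := by
      calc x + y = r.i ≫ Φ.map (rA.r ≫ rA.i + rB.r ≫ rB.i) ≫ r.r := by
            simp [x, y, Functor.map_add]
        _ = 𝟙 G := by rw [htot]; simp
    rcases hloc x with hx | hx
    · have := (isUnit_iff_isIso _).1 hx
      obtain ⟨s⟩ := nonempty_retract_of_isIso_comp (r.i ≫ Φ.map rA.r) (Φ.map rA.i ≫ r.r)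
      obtain ⟨L, hL, ⟨t⟩, hGL⟩ := ih _ (finrank_end_lt_of_biprod_iso k φ hB) A s rfl
      exact ⟨L, hL, ⟨t.trans rA⟩, hGL⟩
    · rw [← hxy, add_sub_cancel_left] at hx
      have := (isUnit_iff_isIso _).1 hx
      obtain ⟨s⟩ := nonempty_retract_of_isIso_comp (r.i ≫ Φ.map rB.r) (Φ.map rB.i ≫ r.r)
      obtain ⟨L, hL, ⟨t⟩, hGL⟩ :=
        ih _ (finrank_end_lt_of_biprod_iso k (φ ≪≫ biprod.braiding A B) hA) B s rfl
      exact ⟨L, hL, ⟨t.trans rB⟩, hGL⟩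

end Additive

theorem isSummand_iff_nonempty_retract {a b : C} {G F : a ⟶ b} :
    IsSummand G F ↔ Nonempty (Retract G F) :=
  ⟨fun ⟨ι, π, h⟩ => ⟨⟨ι, π, h⟩⟩, fun ⟨r⟩ => ⟨r.i, r.r, r.retract⟩⟩

theorem indec_iff_indecomposable [∀ a b : C, Preadditive (a ⟶ b)]
    [∀ a b : C, HasFiniteBiproducts (a ⟶ b)] {a b : C} {F : a ⟶ b} :
    Indec F ↔ Indecomposable F :=
  ⟨fun h => ⟨h.1, fun G H φ => h.2 G H ⟨φ⟩⟩, fun h => ⟨h.1, fun G H ⟨φ⟩ => h.2 G H φ⟩⟩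

/-- In a fiat category, an indecomposable summand of `Φ X`, for `Φ` an additive functor between
hom-categories, is a summand of `Φ L` for an indecomposable summand `L` of `X`. -/
theorem FiatAxioms.exists_indec_summand {k : Type*} [Field k] [IsAlgClosed k]
    [Bicategory.Strict C] [∀ a b : C, Preadditive (a ⟶ b)]
    [∀ a b : C, HasFiniteBiproducts (a ⟶ b)] [∀ a b : C, Linear k (a ⟶ b)]
    (S : FiatAxioms k C) {a b c d : C} (Φ : (a ⟶ b) ⥤ (c ⟶ d)) [Φ.Additive] {G : c ⟶ d}
    (hG : Indec G) (X : a ⟶ b) (h : IsSummand G (Φ.obj X)) :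
    ∃ L : a ⟶ b, Indec L ∧ IsSummand L X ∧ IsSummand G (Φ.obj L) := by
  have := S.idemComplete c d
  have := S.finDim a b
  have : FiniteDimensional k (End G) := S.finDim c d G G
  rw [indec_iff_indecomposable] at hG
  simp only [isSummand_iff_nonempty_retract, indec_iff_indecomposable] at h ⊢
  exact exists_indecomposable_retract k Φ hG.1
    (isUnit_or_isUnit_one_sub_of_trivial_idempotents k
      fun e he => eq_zero_or_eq_id_of_indecomposable hG e he) X h.some

/-- In a fiat category, on indecomposable 1-morphisms, the two-sided
preorder `≤_LR` is the composite of `≤_R` followed by `≤_L`, and also the composite of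
`≤_L` followed by `≤_R`. -/
theorem leLR_eq_leR_comp_leL
    (k : Type*) [Field k] [IsAlgClosed k]
    {C : Type u} [Bicategory.{w, v} C] [Bicategory.Strict C]
    [∀ a b : C, Preadditive (a ⟶ b)] [∀ a b : C, HasFiniteBiproducts (a ⟶ b)]
    [∀ a b : C, Linear k (a ⟶ b)]
    (S : FiatAxioms k C)
    (F G : OneMor C) (hF : IndecM F) (hG : IndecM G) :
    (leLR F G ↔ ∃ L : OneMor C, IndecM L ∧ leR F L ∧ leL L G) ∧
    (leLR F G ↔ ∃ L' : OneMor C, IndecM L' ∧ leL F L' ∧ leR L' G) := by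
  obtain ⟨a, b, F⟩ := F
  obtain ⟨c, d, G⟩ := G
  refine ⟨⟨?_, ?_⟩, ⟨?_, ?_⟩⟩
  · rintro ⟨H₁, H₂, h⟩
    have : (Bicategory.precomp d H₁).Additive := ⟨S.whiskerLeft_add H₁ _ _⟩
    obtain ⟨L, hL, hLF, hGL⟩ :=
      S.exists_indec_summand (Bicategory.precomp d H₁) hG (F ≫ H₂) h
    exact ⟨⟨a, d, L⟩, hL, ⟨rfl, H₂, hLF⟩, ⟨rfl, H₁, hGL⟩⟩
  · rintro ⟨⟨a', d', L⟩, -, ⟨h, H₂, hLF⟩, ⟨h', H₁, hGL⟩⟩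
    dsimp only at h h' H₁ H₂
    subst h h'
    obtain ⟨r⟩ := isSummand_iff_nonempty_retract.1 hLF
    obtain ⟨s⟩ := isSummand_iff_nonempty_retract.1 hGL
    exact ⟨H₁, H₂, isSummand_iff_nonempty_retract.2
      ⟨s.trans (r.map (Bicategory.precomp d' H₁))⟩⟩
  · rintro ⟨H₁, H₂, h⟩
    have : (Bicategory.postcomp c H₂).Additive := ⟨S.whiskerRight_add _ _ H₂⟩
    obtain ⟨r⟩ := isSummand_iff_nonempty_retract.1 h
    obtain ⟨L, hL, hLF, hGL⟩ :=
      S.exists_indec_summand (Bicategory.postcomp c H₂) hG (H₁ ≫ F)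
        (isSummand_iff_nonempty_retract.2
          ⟨r.trans (Retract.ofIso (Bicategory.associator H₁ F H₂).symm)⟩)
    exact ⟨⟨c, b, L⟩, hL, ⟨rfl, H₁, hLF⟩, ⟨rfl, H₂, hGL⟩⟩
  · rintro ⟨⟨c', b', L⟩, -, ⟨h, H₁, hLF⟩, ⟨h', H₂, hGL⟩⟩
    dsimp only at h h' H₁ H₂
    subst h h'
    obtain ⟨r⟩ := isSummand_iff_nonempty_retract.1 hLF
    obtain ⟨s⟩ := isSummand_iff_nonempty_retract.1 hGL
    exact ⟨H₁, H₂, isSummand_iff_nonempty_retract.2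
      ⟨(s.trans (r.map (Bicategory.postcomp c' H₂))).trans
        (Retract.ofIso (Bicategory.associator H₁ F H₂))⟩⟩

end CellTwoRep
end

section
/- Let Q be a regular two-sided cell of a fiat category C, let R be a right cell contained in Q and let L be a left cell contained in Q. Then L and R have nonempty intersection: there exists an indecomposable 1-morphism N of C with N in L and N in R. -/
open CategoryTheory CategoryTheory.Limits

universe w v u

attribute [local instance] CategoryTheory.Limits.hasBinaryBiproducts_of_finite_biproducts

namespace CellTwoRep

variable {C : Type u} [Bicategory.{w, v} C]

open Bicategory

section Summand

variable {a b c : C}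

theorem IsSummand.refl (F : a ⟶ b) : IsSummand F F := ⟨𝟙 F, 𝟙 F, by simp⟩

theorem IsSummand.of_iso {F G : a ⟶ b} (e : F ≅ G) : IsSummand F G :=
  ⟨e.hom, e.inv, e.hom_inv_id⟩

theorem IsSummand.trans {F G H : a ⟶ b} (h : IsSummand F G) (h' : IsSummand G H) :
    IsSummand F H := by
  obtain ⟨i, p, hip⟩ := h
  obtain ⟨j, q, hjq⟩ := h'
  exact ⟨i ≫ j, q ≫ p, by rw [Category.assoc, reassoc_of% hjq, hip]⟩

theorem IsSummand.comp_left (H : a ⟶ b) {F G : b ⟶ c} (h : IsSummand F G) :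
    IsSummand (H ≫ F) (H ≫ G) := by
  obtain ⟨i, p, hip⟩ := h
  exact ⟨H ◁ i, H ◁ p, by rw [← whiskerLeft_comp, hip, whiskerLeft_id]⟩

theorem IsSummand.comp_right {F G : a ⟶ b} (h : IsSummand F G) (H : b ⟶ c) :
    IsSummand (F ≫ H) (G ≫ H) := by
  obtain ⟨i, p, hip⟩ := h
  exact ⟨i ▷ H, p ▷ H, by rw [← comp_whiskerRight, hip, id_whiskerRight]⟩

/-- A left adjoint `f` is a direct summand of `f ∘ g ∘ f`. -/
theorem isSummand_left_adjoint {f : a ⟶ b} {g : b ⟶ a} (adj : Bicategory.Adjunction f g) :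
    IsSummand f (f ≫ g ≫ f) := by
  refine ⟨(λ_ f).inv ≫ adj.unit ▷ f ≫ (α_ _ _ _).hom, f ◁ adj.counit ≫ (ρ_ f).hom, ?_⟩
  calc _ = (λ_ f).inv ≫ leftZigzag adj.unit adj.counit ≫ (ρ_ f).hom := by
        simp [leftZigzag, bicategoricalComp]
    _ = 𝟙 f := by rw [adj.left_triangle]; simp

/-- A right adjoint `g` is a direct summand of `g ∘ f ∘ g`. -/
theorem isSummand_right_adjoint {f : a ⟶ b} {g : b ⟶ a} (adj : Bicategory.Adjunction f g) :
    IsSummand g (g ≫ f ≫ g) := by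
  refine ⟨(ρ_ g).inv ≫ g ◁ adj.unit, (α_ _ _ _).inv ≫ adj.counit ▷ g ≫ (λ_ g).hom, ?_⟩
  calc _ = (ρ_ g).inv ≫ rightZigzag adj.unit adj.counit ≫ (λ_ g).hom := by
        simp [rightZigzag, bicategoricalComp]
    _ = 𝟙 g := by rw [adj.right_triangle]; simp

theorem IsSummand.not_isZero [∀ a b : C, Preadditive (a ⟶ b)] {F G : a ⟶ b}
    (h : IsSummand F G) (hF : ¬ IsZero F) : ¬ IsZero G := by
  obtain ⟨i, p, hip⟩ := h
  intro hG
  exact hF ((IsZero.iff_id_eq_zero _).2 (by rw [← hip, hG.eq_of_tgt i 0, zero_comp]))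

end Summand

section Preorders

theorem leR.refl (F : OneMor C) : leR F F :=
  ⟨rfl, 𝟙 _, .of_iso (ρ_ F.mor).symm⟩

theorem leL.refl (F : OneMor C) : leL F F :=
  ⟨rfl, 𝟙 _, .of_iso (λ_ F.mor).symm⟩

theorem leR.trans {F G K : OneMor C} (h : leR F G) (h' : leR G K) : leR F K := by
  obtain ⟨a, b, f⟩ := F
  obtain ⟨a', c, g⟩ := G
  obtain ⟨a'', d, l⟩ := K
  obtain ⟨rfl : a = a', H, hH⟩ := h
  obtain ⟨rfl : a = a'', H', hH'⟩ := h'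
  exact ⟨rfl, H ≫ H', hH'.trans ((hH.comp_right H').trans (.of_iso (α_ _ _ _)))⟩

theorem leL.trans {F G K : OneMor C} (h : leL F G) (h' : leL G K) : leL F K := by
  obtain ⟨a, b, f⟩ := F
  obtain ⟨c, b', g⟩ := G
  obtain ⟨d, b'', l⟩ := K
  obtain ⟨rfl : b = b', H, hH⟩ := h
  obtain ⟨rfl : b = b'', H', hH'⟩ := h'
  exact ⟨rfl, H' ≫ H, hH'.trans ((hH.comp_left H').trans (.of_iso (α_ _ _ _).symm))⟩

theorem leLR.trans {F G K : OneMor C} (h : leLR F G) (h' : leLR G K) : leLR F K := by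
  obtain ⟨H₁, H₂, hH⟩ := h
  obtain ⟨H₁', H₂', hH'⟩ := h'
  refine ⟨H₁' ≫ H₁, H₂ ≫ H₂', hH'.trans (((hH.comp_right H₂').comp_left H₁').trans (.of_iso ?_))⟩
  exact whiskerLeftIso H₁' (α_ _ _ _ ≪≫ whiskerLeftIso H₁ (α_ _ _ _)) ≪≫ (α_ _ _ _).symm

theorem leR.leLR {F G : OneMor C} (h : leR F G) : leLR F G := by
  obtain ⟨a, b, f⟩ := F
  obtain ⟨a', c, g⟩ := G
  obtain ⟨rfl : a = a', H, hH⟩ := h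
  exact ⟨𝟙 _, H, hH.trans (.of_iso (λ_ _).symm)⟩

theorem leL.leLR {F G : OneMor C} (h : leL F G) : leLR F G := by
  obtain ⟨a, b, f⟩ := F
  obtain ⟨c, b', g⟩ := G
  obtain ⟨rfl : b = b', H, hH⟩ := h
  exact ⟨H, 𝟙 _, hH.trans ((IsSummand.of_iso (ρ_ _).symm).trans (.of_iso (α_ _ _ _)))⟩

theorem simLR.symm {F G : OneMor C} (h : simLR F G) : simLR G F := ⟨h.2, h.1⟩

theorem simLR.trans {F G K : OneMor C} (h : simLR F G) (h' : simLR G K) : simLR F K :=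
  ⟨h.1.trans h'.1, h'.2.trans h.2⟩

theorem simR.simLR {F G : OneMor C} (h : simR F G) : simLR F G := ⟨h.1.leLR, h.2.leLR⟩

end Preorders

section Cells

variable [∀ a b : C, Preadditive (a ⟶ b)] [∀ a b : C, HasFiniteBiproducts (a ⟶ b)]

theorem IsTwoSidedCell.indecM {Q : Set (OneMor C)} (hQ : IsTwoSidedCell Q) {F : OneMor C}
    (hF : F ∈ Q) : IndecM F := by
  obtain ⟨E, -, rfl⟩ := hQ
  exact hF.1

theorem IsTwoSidedCell.simLR {Q : Set (OneMor C)} (hQ : IsTwoSidedCell Q) {F G : OneMor C}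
    (hF : F ∈ Q) (hG : G ∈ Q) : simLR F G := by
  obtain ⟨E, -, rfl⟩ := hQ
  exact hF.2.symm.trans hG.2

theorem IsTwoSidedCell.mem_of_simLR {Q : Set (OneMor C)} (hQ : IsTwoSidedCell Q) {F G : OneMor C}
    (hF : F ∈ Q) (hG : IndecM G) (h : CellTwoRep.simLR F G) : G ∈ Q := by
  obtain ⟨E, -, rfl⟩ := hQ
  exact ⟨hG, hF.2.trans h⟩

/-- In a regular two-sided cell, `≤_R` implies `∼_R`. -/
theorem IsRegular.simR_of_leR {Q : Set (OneMor C)} (hQ : IsRegular Q) {F G : OneMor C}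
    (hF : F ∈ Q) (hG : G ∈ Q) (h : leR F G) : simR F G := by
  have mem_self {K : OneMor C} (hK : K ∈ Q) : K ∈ {M | IndecM M ∧ simR K M} :=
    ⟨hQ.1.indecM hK, .refl K, .refl K⟩
  have subset {K : OneMor C} (hK : K ∈ Q) : {M | IndecM M ∧ simR K M} ⊆ Q :=
    fun M hM => hQ.1.mem_of_simLR hK hM.1 hM.2.simLR
  by_contra hne
  refine (hQ.2 _ _ ⟨F, hQ.1.indecM hF, rfl⟩ ⟨G, hQ.1.indecM hG, rfl⟩ (subset hF) (subset hG)
    fun heq => hne ?_).1 ⟨F, mem_self hF, G, mem_self hG, h⟩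
  exact (heq.symm ▸ mem_self hG : G ∈ {M | IndecM M ∧ simR F M}).2

end Cells

section Idempotents

variable [∀ a b : C, Preadditive (a ⟶ b)] [∀ a b : C, HasFiniteBiproducts (a ⟶ b)]

theorem Indec.idempotent_trivial {a b : C} [IsIdempotentComplete (a ⟶ b)] {F : a ⟶ b}
    (hF : Indec F) (e : F ⟶ F) (he : e ≫ e = e) : e = 0 ∨ e = 𝟙 F := by
  obtain ⟨Y, i, p, hip, hpi⟩ := IsIdempotentComplete.idempotents_split F e he
  obtain ⟨Z, j, q, hjq, hqj⟩ := IsIdempotentComplete.idempotents_split F (𝟙 F - e) (by simp [he])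
  have hiq : i ≫ q = 0 := by
    have : i ≫ (q ≫ j) ≫ q = 0 := by rw [hqj, ← hpi]; simp [reassoc_of% hip]
    simpa [hjq] using this
  have hjp : j ≫ p = 0 := by
    have : j ≫ (p ≫ i) ≫ p = 0 := by
      rw [hpi, show e = 𝟙 F - q ≫ j by rw [hqj]; abel]; simp [reassoc_of% hjq]
    simpa [hip] using this
  have iso : F ≅ Y ⊞ Z :=
    { hom := biprod.lift p q
      inv := biprod.desc i j
      hom_inv_id := by rw [biprod.lift_desc, hpi, hqj]; abel
      inv_hom_id := by ext <;> simp [hip, hjq, hiq, hjp] }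
  rcases hF.2 Y Z ⟨iso⟩ with h | h
  · left; rw [← hpi, h.eq_of_tgt p 0, zero_comp]
  · right; rw [eq_comm, ← sub_eq_zero, ← hqj, h.eq_of_tgt q 0, zero_comp]

theorem Indec.of_idempotent_trivial {a b : C} {F : a ⟶ b} (hF : ¬ IsZero F)
    (h : ∀ e : F ⟶ F, e ≫ e = e → e = 0 ∨ e = 𝟙 F) : Indec F := by
  refine ⟨hF, fun G H ⟨φ⟩ => ?_⟩
  rcases h (φ.hom ≫ biprod.fst ≫ biprod.inl ≫ φ.inv) (by simp) with h | h
  · left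
    rw [IsZero.iff_id_eq_zero]
    simpa using congr(biprod.inl ≫ φ.inv ≫ $h ≫ φ.hom ≫ biprod.fst)
  · right
    rw [IsZero.iff_id_eq_zero]
    simpa using congr(biprod.inr ≫ φ.inv ≫ $h ≫ φ.hom ≫ biprod.snd).symm

end Idempotents

section LocalEnd

theorem isUnit_or_isUnit_one_sub_of_isArtinianRing {A : Type*} [CommRing A] [IsArtinianRing A]
    (h : ∀ e : A, e * e = e → e = 0 ∨ e = 1) (x : A) : IsUnit x ∨ IsUnit (1 - x) := by
  obtain ⟨n, y, hy⟩ := IsArtinian.exists_pow_succ_smul_dvd x (1 : A)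
  simp only [smul_eq_mul, mul_one, Nat.succ_eq_add_one] at hy
  have key (m : ℕ) : x ^ n * (x ^ m * y ^ m) = x ^ n := by
    induction m with
    | zero => simp
    | succ m ih =>
      calc _ = (x ^ (n + 1) * y) * (x ^ m * y ^ m) := by ring
        _ = x ^ n := by rw [hy, ih]
  rcases h (x ^ n * y ^ n) (by
    calc _ = (x ^ n * (x ^ n * y ^ n)) * y ^ n := by ring
      _ = _ := by rw [key]) with h | h
  · right
    have hx : x ^ n = 0 := by rw [← key n, h, mul_zero]
    exact IsNilpotent.isUnit_one_sub ⟨n, hx⟩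
  · left
    refine IsUnit.of_mul_eq_one y ?_
    calc x * y = (x ^ n * y ^ n) * (x * y) := by rw [h, one_mul]
      _ = (x ^ (n + 1) * y) * y ^ n := by ring
      _ = 1 := by rw [hy, h]

/-- A finite-dimensional algebra with only trivial idempotents is local. -/
theorem isUnit_or_isUnit_one_sub_of_finiteDimensional (k : Type*) [Field k] {A : Type*} [Ring A]
    [Algebra k A] [FiniteDimensional k A] (h : ∀ e : A, e * e = e → e = 0 ∨ e = 1) (x : A) :
    IsUnit x ∨ IsUnit (1 - x) := by
  let B := Algebra.adjoin k {x}
  have : IsMulCommutative B := Algebra.isMulCommutative_adjoin k (by simp)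
  have : IsArtinianRing B := IsArtinianRing.of_finite k B
  let x' : B := ⟨x, Algebra.self_mem_adjoin_singleton k x⟩
  have hB (e : B) (he : e * e = e) : e = 0 ∨ e = 1 := by
    rcases h e (congrArg Subtype.val he) with h | h
    · exact .inl (Subtype.ext h)
    · exact .inr (Subtype.ext h)
  exact (isUnit_or_isUnit_one_sub_of_isArtinianRing hB x').imp
    (fun hu => hu.map B.val) (fun hu => by simpa [x'] using hu.map B.val)

end LocalEnd

namespace FiatAxioms

variable {k : Type*} [Field k] [IsAlgClosed k] [Bicategory.Strict C]
  [∀ a b : C, Preadditive (a ⟶ b)] [∀ a b : C, HasFiniteBiproducts (a ⟶ b)]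
  [∀ a b : C, Linear k (a ⟶ b)]

theorem whiskerLeft_zero (S : FiatAxioms k C) {a b c : C} (f : a ⟶ b) (g h : b ⟶ c) :
    f ◁ (0 : g ⟶ h) = 0 := by
  simpa using S.whiskerLeft_add f (0 : g ⟶ h) 0

theorem whiskerRight_zero (S : FiatAxioms k C) {a b c : C} (f g : a ⟶ b) (h : b ⟶ c) :
    (0 : f ⟶ g) ▷ h = 0 := by
  simpa using S.whiskerRight_add (0 : f ⟶ g) 0 h

theorem isZero_comp_left (S : FiatAxioms k C) {a b c : C} (f : a ⟶ b) {g : b ⟶ c}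
    (hg : IsZero g) : IsZero (f ≫ g) := by
  rw [IsZero.iff_id_eq_zero, ← whiskerLeft_id, hg.eq_of_src (𝟙 g) 0, S.whiskerLeft_zero]

theorem isZero_comp_right (S : FiatAxioms k C) {a b c : C} {f : a ⟶ b} (hf : IsZero f)
    (g : b ⟶ c) : IsZero (f ≫ g) := by
  rw [IsZero.iff_id_eq_zero, ← id_whiskerRight, hf.eq_of_src (𝟙 f) 0, S.whiskerRight_zero]

theorem conjugateEquiv_symm_zero (S : FiatAxioms k C) {a b : C} {f : a ⟶ b} {g : b ⟶ a}
    (adj : Bicategory.Adjunction f g) : (conjugateEquiv adj adj).symm 0 = 0 := by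
  simp [conjugateEquiv_symm_apply', S.whiskerLeft_zero, S.whiskerRight_zero]

/-- The involution preserves indecomposability. -/
theorem indec_star (S : FiatAxioms k C) {a b : C} {F : a ⟶ b} (hF : Indec F) :
    Indec (S.star F) := by
  have := S.idemComplete a b
  obtain ⟨adj⟩ := S.adj F
  refine .of_idempotent_trivial (fun h => ?_) fun e he => ?_
  · exact (isSummand_left_adjoint adj).not_isZero hF.1
      (S.isZero_comp_left F (S.isZero_comp_right h F))
  · rcases hF.idempotent_trivial ((conjugateEquiv adj adj).symm e)
      (by rw [Bicategory.conjugateEquiv_symm_comp, he]) with h | h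
    · left; rwa [← S.conjugateEquiv_symm_zero adj, Equiv.apply_eq_iff_eq] at h
    · right; rwa [← conjugateEquiv_symm_id adj, Equiv.apply_eq_iff_eq] at h

theorem isSummand_star (S : FiatAxioms k C) {a b : C} {F G : a ⟶ b} (h : IsSummand F G) :
    IsSummand (S.star F) (S.star G) := by
  obtain ⟨i, p, hip⟩ := h
  exact ⟨S.star2 i, S.star2 p, by rw [← S.star2_comp, hip, S.star2_id]⟩

/-- An indecomposable summand of a sum of two retracts is a summand of one of them. -/
theorem isSummand_or_isSummand (S : FiatAxioms k C) {a b : C} {G X A B : a ⟶ b}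
    (hG : Indec G) (h : IsSummand G X) (i : A ⟶ X) (p : X ⟶ A) (j : B ⟶ X) (q : X ⟶ B)
    (hX : p ≫ i + q ≫ j = 𝟙 X) :
    IsSummand G A ∨ IsSummand G B := by
  obtain ⟨s, r, hsr⟩ := h
  have := S.idemComplete a b
  have : FiniteDimensional k (End G) := S.finDim a b G G
  have hsum : 𝟙 G - s ≫ p ≫ i ≫ r = s ≫ q ≫ j ≫ r := by
    rw [sub_eq_iff_eq_add', ← hsr]
    simpa using congr(s ≫ $hX ≫ r).symm
  rcases isUnit_or_isUnit_one_sub_of_finiteDimensional k (A := End G)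
    (fun e he => hG.idempotent_trivial e he) (s ≫ p ≫ i ≫ r : G ⟶ G) with h | h
  · obtain ⟨t, ht⟩ := h.exists_left_inv
    exact .inl ⟨s ≫ p, i ≫ r ≫ t, by simpa [End.mul_def] using ht⟩
  · obtain ⟨t, ht⟩ := h.exists_left_inv
    replace ht : (𝟙 G - s ≫ p ≫ i ≫ r) ≫ t = 𝟙 G := ht
    rw [hsum] at ht
    exact .inr ⟨s ≫ q, j ≫ r ≫ t, by simpa using ht⟩

/-- If an endomorphism space of a retract is at least as large as that of the whole object, then a
complementary summand vanishes. -/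
theorem isZero_of_finrank_le (S : FiatAxioms k C) {a b : C} {X A B : a ⟶ b}
    (i : A ⟶ X) (p : X ⟶ A) (hip : i ≫ p = 𝟙 A) (j : B ⟶ X) (q : X ⟶ B)
    (hjq : j ≫ q = 𝟙 B) (hjp : j ≫ p = 0)
    (hle : Module.finrank k (X ⟶ X) ≤ Module.finrank k (A ⟶ A)) : IsZero B := by
  have := S.finDim a b A A
  have := S.finDim a b X X
  let φ : (A ⟶ A) →ₗ[k] (X ⟶ X) := Linear.leftComp k X p ∘ₗ Linear.rightComp k A i
  have hφ (f : A ⟶ A) : φ f = p ≫ f ≫ i := rfl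
  have hinj : Function.Injective φ := by
    intro f g hfg
    have := congr(i ≫ $hfg ≫ p)
    simpa [hφ, reassoc_of% hip, hip] using this
  have hsurj : Function.Surjective φ :=
    (LinearMap.injective_iff_surjective_of_finrank_eq_finrank
      (le_antisymm (LinearMap.finrank_le_finrank_of_injective hinj) hle)).1 hinj
  obtain ⟨f, hf⟩ := hsurj (𝟙 X)
  rw [IsZero.iff_id_eq_zero, ← hjq, ← Category.id_comp q, ← hf, hφ]
  simp [reassoc_of% hjp]

/-- An indecomposable summand of `X ∘ H` is a summand of `Y ∘ H` for some indecomposable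
summand `Y` of `X`. -/
theorem exists_indec_isSummand (S : FiatAxioms k C) {a b c : C} {G : a ⟶ c}
    (hG : Indec G) (H : a ⟶ b) (X : b ⟶ c) (h : IsSummand G (H ≫ X)) :
    ∃ Y : b ⟶ c, Indec Y ∧ IsSummand Y X ∧ IsSummand G (H ≫ Y) := by
  let P : Set (b ⟶ c) := {Y | IsSummand Y X ∧ IsSummand G (H ≫ Y)}
  obtain ⟨Y, hY, hmin⟩ := exists_minimalFor_of_wellFoundedLT (· ∈ P)
    (fun Y => Module.finrank k (Y ⟶ Y)) ⟨X, .refl X, h⟩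
  replace hmin {A : b ⟶ c} (hA : A ∈ P) :
      Module.finrank k (Y ⟶ Y) ≤ Module.finrank k (A ⟶ A) :=
    (le_total _ _).elim id (hmin hA)
  refine ⟨Y, ⟨fun hz => ?_, fun A B ⟨φ⟩ => ?_⟩, hY⟩
  · exact hY.2.not_isZero hG.1 (S.isZero_comp_left H hz)
  have htotal : (φ.hom ≫ biprod.fst) ≫ (biprod.inl ≫ φ.inv) +
      (φ.hom ≫ biprod.snd) ≫ (biprod.inr ≫ φ.inv) = 𝟙 Y := by
    have := congr(φ.hom ≫ $(biprod.total (X := A) (Y := B)) ≫ φ.inv)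
    simpa only [Preadditive.add_comp, Preadditive.comp_add, Category.assoc, Category.id_comp,
      Iso.hom_inv_id] using this
  have hA : IsSummand A Y := ⟨biprod.inl ≫ φ.inv, φ.hom ≫ biprod.fst, by simp⟩
  have hB : IsSummand B Y := ⟨biprod.inr ≫ φ.inv, φ.hom ≫ biprod.snd, by simp⟩
  rcases S.isSummand_or_isSummand hG hY.2 (H ◁ (biprod.inl ≫ φ.inv)) (H ◁ (φ.hom ≫ biprod.fst))
    (H ◁ (biprod.inr ≫ φ.inv)) (H ◁ (φ.hom ≫ biprod.snd)) (by
      rw [← whiskerLeft_comp, ← whiskerLeft_comp, ← S.whiskerLeft_add, htotal,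
        whiskerLeft_id]) with hs | hs
  · exact .inr (S.isZero_of_finrank_le (biprod.inl ≫ φ.inv) (φ.hom ≫ biprod.fst) (by simp)
      (biprod.inr ≫ φ.inv) (φ.hom ≫ biprod.snd) (by simp) (by simp)
      (hmin ⟨hA.trans hY.1, hs⟩))
  · exact .inl (S.isZero_of_finrank_le (biprod.inr ≫ φ.inv) (φ.hom ≫ biprod.snd) (by simp)
      (biprod.inl ≫ φ.inv) (φ.hom ≫ biprod.fst) (by simp) (by simp)
      (hmin ⟨hB.trans hY.1, hs⟩))

/-- The involution on 1-morphisms bundled with their endpoints. -/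
def starM (S : FiatAxioms k C) (F : OneMor C) : OneMor C := ⟨F.tgt, F.src, S.star F.mor⟩

theorem simLR_starM (S : FiatAxioms k C) (F : OneMor C) : simLR F (S.starM F) := by
  obtain ⟨adj⟩ := S.adj F.mor
  exact ⟨⟨S.star F.mor, S.star F.mor, isSummand_right_adjoint adj⟩,
    ⟨F.mor, F.mor, isSummand_left_adjoint adj⟩⟩

theorem leR_starM (S : FiatAxioms k C) {F G : OneMor C} (h : leL F G) :
    leR (S.starM F) (S.starM G) := by
  obtain ⟨a, b, f⟩ := F
  obtain ⟨c, b', g⟩ := G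
  obtain ⟨rfl : b = b', H, hH⟩ := h
  exact ⟨rfl, S.star H, (S.isSummand_star hH).trans (.of_iso (S.starComp H f).some)⟩

theorem leL_of_leR_starM (S : FiatAxioms k C) {F G : OneMor C} (h : leR (S.starM F) (S.starM G)) :
    leL F G := by
  obtain ⟨a, b, f⟩ := F
  obtain ⟨c, b', g⟩ := G
  obtain ⟨rfl : b = b', H, hH⟩ := h
  refine ⟨rfl, S.star H, (IsSummand.of_iso (S.starStar g).some.symm).trans
    ((S.isSummand_star hH).trans (.of_iso ?_))⟩
  exact (S.starComp (S.star f) H).some ≪≫ whiskerLeftIso _ (S.starStar f).some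

/-- In a regular two-sided cell, `≤_L` implies `∼_L`. -/
theorem simL_of_leL (S : FiatAxioms k C) {Q : Set (OneMor C)} (hQ : IsRegular Q) {F G : OneMor C}
    (hF : F ∈ Q) (hG : G ∈ Q) (h : leL F G) : simL F G := by
  have star_mem {K : OneMor C} (hK : K ∈ Q) : S.starM K ∈ Q :=
    hQ.1.mem_of_simLR hK (S.indec_star (hQ.1.indecM hK)) (S.simLR_starM K)
  exact ⟨h, S.leL_of_leR_starM
    (hQ.simR_of_leR (star_mem hF) (star_mem hG) (S.leR_starM h)).2⟩

end FiatAxioms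

/-- In a fiat category, a right cell and a left cell inside the same
regular two-sided cell have nonempty intersection. -/
theorem regular_left_and_right_cells_intersect
    (k : Type*) [Field k] [IsAlgClosed k]
    {C : Type u} [Bicategory.{w, v} C] [Bicategory.Strict C]
    [∀ a b : C, Preadditive (a ⟶ b)] [∀ a b : C, HasFiniteBiproducts (a ⟶ b)]
    [∀ a b : C, Linear k (a ⟶ b)]
    (S : FiatAxioms k C)
    (Q R L : Set (OneMor C)) (hQ : IsRegular Q)
    (hR : IsRightCell R) (hRQ : R ⊆ Q)
    (hL : IsLeftCell L) (hLQ : L ⊆ Q) :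
    ∃ N : OneMor C, N ∈ L ∧ N ∈ R := by
  obtain ⟨F, hF, rfl⟩ := hR
  obtain ⟨G, hG, rfl⟩ := hL
  have hFQ : F ∈ Q := hRQ ⟨hF, .refl F, .refl F⟩
  have hGQ : G ∈ Q := hLQ ⟨hG, .refl G, .refl G⟩
  obtain ⟨H₁, H₂, hsum⟩ := (hQ.1.simLR hFQ hGQ).1
  obtain ⟨Y, hY, hYX, hGY⟩ := S.exists_indec_isSummand hG H₁ (F.mor ≫ H₂) hsum
  let N : OneMor C := ⟨F.src, G.tgt, Y⟩
  have hFN : leR F N := ⟨rfl, H₂, hYX⟩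
  have hNG : leL N G := ⟨rfl, H₁, hGY⟩
  have hNQ : N ∈ Q := hQ.1.mem_of_simLR hFQ hY
    ⟨hFN.leLR, hNG.leLR.trans (hQ.1.simLR hGQ hFQ).1⟩
  have hsim := S.simL_of_leL hQ hNQ hGQ hNG
  exact ⟨N, ⟨hY, hsim.2, hsim.1⟩, hY, hQ.simR_of_leR hFQ hNQ hFN⟩

end CellTwoRep
end

section
/- Let C be a finitary 2-category over k, let i and j be objects of C, let H: i -> i and F: i -> j be indecomposable 1-morphisms, and let m and c be positive integers such that H o H is isomorphic to H^{⊕m} in C(i,i) and F o H is isomorphic to F^{⊕c} in C(i,j). Then c = m. -/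
open CategoryTheory CategoryTheory.Limits

universe w v u

attribute [local instance] CategoryTheory.Limits.hasBinaryBiproducts_of_finite_biproducts

namespace CellTwoRep

variable {C : Type u} [Bicategory.{w, v} C]

/-- The axioms of a `k`-finitary 2-category, on top of a strict bicategory whose
hom-categories are additive and `k`-linear. -/
structure FinitaryAxioms (k : Type*) [Field k] [IsAlgClosed k]
    (C : Type u) [Bicategory.{w, v} C] [Bicategory.Strict C]
    [∀ a b : C, Preadditive (a ⟶ b)] [∀ a b : C, HasFiniteBiproducts (a ⟶ b)]
    [∀ a b : C, Linear k (a ⟶ b)] : Prop where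
  /-- finitely many objects -/
  finObj : Finite C
  /-- each hom-category is idempotent complete -/
  idemComplete : ∀ a b : C, IsIdempotentComplete (a ⟶ b)
  /-- finite-dimensional spaces of 2-morphisms -/
  finDim : ∀ (a b : C) (f g : a ⟶ b), FiniteDimensional k (f ⟶ g)
  /-- finitely many isomorphism classes of indecomposable 1-morphisms -/
  finIndec : ∀ a b : C, ∃ (n : ℕ) (ι : Fin n → (a ⟶ b)),
      ∀ F : a ⟶ b, Indec F → ∃ i, Nonempty (F ≅ ι i)
  /-- each identity 1-morphism is indecomposable -/
  idIndec : ∀ a : C, Indec (𝟙 a)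
  /-- horizontal composition is additive in the second variable -/
  whiskerLeft_add : ∀ {a b c : C} (f : a ⟶ b) {g h : b ⟶ c} (η θ : g ⟶ h),
      Bicategory.whiskerLeft f (η + θ) =
        Bicategory.whiskerLeft f η + Bicategory.whiskerLeft f θ
  /-- horizontal composition is additive in the first variable -/
  whiskerRight_add : ∀ {a b c : C} {f g : a ⟶ b} (η θ : f ⟶ g) (h : b ⟶ c),
      Bicategory.whiskerRight (η + θ) h =
        Bicategory.whiskerRight η h + Bicategory.whiskerRight θ h

section BiproductMultiplicity

variable {D : Type*} [Category* D] [Preadditive D] [HasFiniteBiproducts D]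

/-- Morphisms into a finite power of `Y` are families of morphisms into `Y`. -/
noncomputable def homBiproductLinearEquiv (k : Type*) [Field k] [Linear k D] (X Y : D) (n : ℕ) :
    (X ⟶ ⨁ (fun _ : Fin n => Y)) ≃ₗ[k] (Fin n → (X ⟶ Y)) where
  toFun f t := f ≫ biproduct.π _ t
  invFun g := biproduct.lift g
  map_add' f g := by ext; simp
  map_smul' r f := by ext; simp
  left_inv f := by ext; simp
  right_inv g := by ext; simp

/-- Isomorphic finite powers of a nonzero object with finite-dimensional endomorphism space
have the same multiplicity. -/
theorem eq_of_biproduct_iso (k : Type*) [Field k] [Linear k D] {X : D}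
    [FiniteDimensional k (X ⟶ X)] (hX : ¬ IsZero X) {m n : ℕ}
    (e : (⨁ (fun _ : Fin m => X)) ≅ ⨁ (fun _ : Fin n => X)) : m = n := by
  have hid : 𝟙 X ≠ 0 := fun h => hX ((IsZero.iff_id_eq_zero X).2 h)
  have : Nontrivial (X ⟶ X) := ⟨_, _, hid⟩
  have hdim := ((homBiproductLinearEquiv k X X m).symm.trans
    ((Linear.homCongr k (Iso.refl X) e).trans (homBiproductLinearEquiv k X X n))).finrank_eq
  simp only [Module.finrank_pi_fintype, Finset.sum_const, Finset.card_univ, Fintype.card_fin,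
    smul_eq_mul] at hdim
  exact Nat.eq_of_mul_eq_mul_right Module.finrank_pos hdim

/-- A positive finite power of a nonzero object is nonzero. -/
theorem not_isZero_biproduct {X : D} (hX : ¬ IsZero X) {n : ℕ} (hn : 0 < n) :
    ¬ IsZero (⨁ (fun _ : Fin n => X)) := fun h => hX <| by
  rw [IsZero.iff_id_eq_zero, ← biproduct.ι_π_self (fun _ : Fin n => X) ⟨0, hn⟩,
    h.eq_of_tgt (biproduct.ι (fun _ : Fin n => X) ⟨0, hn⟩) 0, zero_comp]

end BiproductMultiplicity

/-- If `H : i ⟶ i` and `F : i ⟶ j` are indecomposable 1-morphisms of a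
finitary 2-category with `H ∘ H ≅ H^{⊕m}` and `F ∘ H ≅ F^{⊕c}` for positive integers
`m, c`, then `c = m`. (Here `F ∘ H` denotes the horizontal composite applying `H` first,
i.e. `H ≫ F`.) -/
theorem multiplicity_of_idempotent_onemorphism
    (k : Type*) [Field k] [IsAlgClosed k]
    {C : Type u} [Bicategory.{w, v} C] [Bicategory.Strict C]
    [∀ a b : C, Preadditive (a ⟶ b)] [∀ a b : C, HasFiniteBiproducts (a ⟶ b)]
    [∀ a b : C, Linear k (a ⟶ b)]
    (S : FinitaryAxioms k C)
    (i j : C) (H : i ⟶ i) (F : i ⟶ j) (hH : Indec H) (hF : Indec F)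
    (m c : ℕ) (hm : 0 < m) (hc : 0 < c)
    (eHH : Nonempty ((H ≫ H) ≅ ⨁ (fun _ : Fin m => H)))
    (eFH : Nonempty ((H ≫ F) ≅ ⨁ (fun _ : Fin c => F))) :
    c = m := by
  obtain ⟨eHH⟩ := eHH
  obtain ⟨eFH⟩ := eFH
  have : (Bicategory.precomp j H).Additive := ⟨S.whiskerLeft_add H _ _⟩
  have : (Bicategory.postcomp i F).Additive := ⟨S.whiskerRight_add _ _ F⟩
  have := S.finDim i j (H ≫ F) (H ≫ F)
  have hX : ¬ IsZero (H ≫ F) := fun h =>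
    not_isZero_biproduct hF.1 hc (h.of_iso eFH.symm)
  have ec : H ≫ H ≫ F ≅ ⨁ (fun _ : Fin c => H ≫ F) :=
    (Bicategory.precomp j H).mapIso eFH ≪≫ (Bicategory.precomp j H).mapBiproduct _
  have em : (H ≫ H) ≫ F ≅ ⨁ (fun _ : Fin m => H ≫ F) :=
    (Bicategory.postcomp i F).mapIso eHH ≪≫ (Bicategory.postcomp i F).mapBiproduct _
  exact eq_of_biproduct_iso k hX (ec.symm ≪≫ (Bicategory.associator H H F).symm ≪≫ em)

end CellTwoRep
end

section
/- Let D = C[X]/(X^2) be the algebra of dual numbers over the complex numbers and let phi: C -> D be the structure algebra map. Then the restriction of scalars functor ModuleCat D -> ModuleCat C along phi is left adjoint to the extension of scalars functor ModuleCat C -> ModuleCat D, V |-> D ⊗_C V. (Together with the standard adjunction in which extension of scalars is left adjoint to restriction of scalars, this shows that extension of scalars along phi is biadjoint to restriction of scalars, reflecting that D is a self-injective algebra.) -/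
open CategoryTheory

/-- The algebra `D = ℂ[X]/(X²)` of dual numbers over the complex numbers. -/
noncomputable abbrev DualNum : Type :=
  Polynomial ℂ ⧸ Ideal.span ({Polynomial.X ^ 2} : Set (Polynomial ℂ))

open scoped ChangeOfRings

universe v u₁ u₂

/-- A Frobenius system for a homomorphism `f : R →+* S` of commutative rings: an `R`-linear form
on `S` together with a pair of finite families in `S` that are dual to each other under it. -/
structure FrobeniusSystem {R : Type u₁} {S : Type u₂} [CommRing R] [CommRing S] (f : R →+* S)
    (ι : Type*) [Fintype ι] where
  /-- The Frobenius form. -/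
  form : S →+ R
  form_map_mul (r : R) (s : S) : form (f r * s) = r * form s
  /-- The first of the two dual families. -/
  left : ι → S
  /-- The second of the two dual families. -/
  right : ι → S
  sum_form_left (s : S) : ∑ i, f (form (s * left i)) * right i = s
  sum_form_right (s : S) : ∑ i, f (form (s * right i)) * left i = s

namespace ModuleCat.ExtendScalars

variable {R : Type u₁} {S : Type u₂} [CommRing R] [CommRing S] (f : R →+* S)

/-- The pure tensor `s ⊗ x` as a biadditive map into the extension of scalars. -/
noncomputable def tmulHom (V : ModuleCat.{v} R) : S →+ V →+ (extendScalars f).obj V where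
  toFun s :=
    { toFun := fun x => s ⊗ₜ[R,f] x
      map_zero' := TensorProduct.tmul_zero _ _
      map_add' := fun x y => TensorProduct.tmul_add _ x y }
  map_zero' := AddMonoidHom.ext fun x => TensorProduct.zero_tmul _ x
  map_add' s t := AddMonoidHom.ext fun x => TensorProduct.add_tmul
    (M := (restrictScalars f).obj (ModuleCat.of S S)) s t x

lemma smul_tmulHom (V : ModuleCat.{v} R) (s t : S) (x : V) :
    s • tmulHom f V t x = tmulHom f V (s * t) x :=
  rfl

lemma map_tmulHom {V W : ModuleCat.{v} R} (g : V ⟶ W) (s : S) (x : V) :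
    (extendScalars f).map g (tmulHom f V s x) = tmulHom f W s (g x) :=
  rfl

lemma tmulHom_map_mul (V : ModuleCat.{v} R) (r : R) (s : S) (x : V) :
    tmulHom f V (f r * s) x = tmulHom f V s (r • x) :=
  TensorProduct.smul_tmul (R := R) (R' := R)
    (M := (restrictScalars f).obj (ModuleCat.of S S)) r s x

@[elab_as_elim]
lemma induction_tmulHom {V : ModuleCat.{v} R} {motive : (extendScalars f).obj V → Prop}
    (tmul : ∀ s x, motive (tmulHom f V s x))
    (add : ∀ x y, motive x → motive y → motive (x + y)) (x : (extendScalars f).obj V) :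
    motive x :=
  TensorProduct.induction_on x ((tmulHom f V 0).map_zero ▸ tmul 0 0) tmul add

/-- The pure tensor `s ⊗ m` for an element `m` of an `S`-module. -/
noncomputable def tmulRestrict (M : ModuleCat.{v} S) :
    S →+ M →+ (extendScalars f).obj ((restrictScalars f).obj M) :=
  tmulHom f ((restrictScalars f).obj M)

lemma smul_tmulRestrict (M : ModuleCat.{v} S) (s t : S) (m : M) :
    s • tmulRestrict f M t m = tmulRestrict f M (s * t) m :=
  rfl

lemma map_restrictScalars_tmulRestrict {M N : ModuleCat.{v} S} (g : M ⟶ N) (s : S) (m : M) :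
    (extendScalars f).map ((restrictScalars f).map g) (tmulRestrict f M s m) =
      tmulRestrict f N s (g m) :=
  rfl

lemma tmulRestrict_map_mul (M : ModuleCat.{v} S) (r : R) (s : S) (m : M) :
    tmulRestrict f M (f r * s) m = tmulRestrict f M s (f r • m) :=
  tmulHom_map_mul f ((restrictScalars f).obj M) r s m

end ModuleCat.ExtendScalars

namespace FrobeniusSystem

open ModuleCat ModuleCat.ExtendScalars

variable {R : Type u₁} {S : Type u₂} [CommRing R] [CommRing S] {f : R →+* S}
  {ι : Type*} [Fintype ι] (F : FrobeniusSystem f ι)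

/-- The Casimir element `∑ i, left i ⊗ right i` is central. -/
lemma sum_tmulRestrict_smul (M : ModuleCat.{v} S) (s : S) (m : M) :
    ∑ i, tmulRestrict f M (F.left i) (F.right i • s • m) =
      s • ∑ i, tmulRestrict f M (F.left i) (F.right i • m) := by
  have expand_right (i : ι) : F.right i • s • m =
      ∑ j, f (F.form (s * F.right i * F.left j)) • F.right j • m := by
    simp_rw [smul_smul, ← Finset.sum_smul, F.sum_form_left, mul_comm]
  have expand_left (j : ι) : s * F.left j =
      ∑ i, f (F.form (s * F.right i * F.left j)) * F.left i := by
    conv_lhs => rw [← F.sum_form_right (s * F.left j)]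
    simp_rw [mul_right_comm]
  calc
    _ = ∑ i, ∑ j, tmulRestrict f M (F.left i)
        (f (F.form (s * F.right i * F.left j)) • F.right j • m) :=
      Finset.sum_congr rfl fun i _ => by
        rw [expand_right i, map_sum]
    _ = ∑ j, ∑ i, tmulRestrict f M
        (f (F.form (s * F.right i * F.left j)) * F.left i) (F.right j • m) := by
      rw [Finset.sum_comm]
      refine Finset.sum_congr rfl fun j _ => Finset.sum_congr rfl fun i _ => ?_
      rw [tmulRestrict_map_mul]
    _ = ∑ j, s • tmulRestrict f M (F.left j) (F.right j • m) :=
      Finset.sum_congr rfl fun j _ => by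
        rw [smul_tmulRestrict, expand_left j, map_sum, AddMonoidHom.finsetSum_apply]
    _ = _ := Finset.smul_sum.symm

/-- The unit `M ⟶ S ⊗ M`, `m ↦ ∑ i, left i ⊗ right i • m`. -/
noncomputable def unitApp (M : ModuleCat.{max v u₂} S) :
    M ⟶ (extendScalars f).obj ((restrictScalars f).obj M) :=
  ModuleCat.ofHom (Y := (extendScalars f).obj ((restrictScalars f).obj M))
    { toFun := fun m => ∑ i, tmulRestrict f M (F.left i) (F.right i • m)
      map_add' := fun m n => by
        simp_rw [smul_add, map_add, Finset.sum_add_distrib]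
      map_smul' := F.sum_tmulRestrict_smul M }

lemma unitApp_apply (M : ModuleCat.{max v u₂} S) (m : M) :
    F.unitApp M m = ∑ i, tmulRestrict f M (F.left i) (F.right i • m) :=
  rfl

/-- The Frobenius form as an `R`-linear map. -/
def formLinear : (restrictScalars f).obj (ModuleCat.of S S) →ₗ[R] R where
  toFun := F.form
  map_add' := F.form.map_add
  map_smul' := F.form_map_mul

/-- The additive map `S ⊗ V → V`, `s ⊗ x ↦ form s • x`. -/
noncomputable def counitAddHom (V : ModuleCat.{max v u₂} R) : (extendScalars f).obj V →+ V :=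
  (TensorProduct.lift ((LinearMap.lsmul R V).comp F.formLinear)).toAddMonoidHom

lemma counitAddHom_tmulHom (V : ModuleCat.{max v u₂} R) (s : S) (x : V) :
    F.counitAddHom V (tmulHom f V s x) = F.form s • x :=
  rfl

lemma counitAddHom_smul (V : ModuleCat.{max v u₂} R) (r : R) (x : (extendScalars f).obj V) :
    F.counitAddHom V (f r • x) = r • F.counitAddHom V x := by
  induction x using induction_tmulHom with
  | tmul s x =>
    rw [smul_tmulHom, counitAddHom_tmulHom, counitAddHom_tmulHom, F.form_map_mul, mul_smul]
  | add x y hx hy => rw [smul_add, map_add, map_add, smul_add, hx, hy]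

/-- The counit `S ⊗ V ⟶ V`, `s ⊗ x ↦ form s • x`. -/
noncomputable def counitApp (V : ModuleCat.{max v u₂} R) :
    (restrictScalars f).obj ((extendScalars f).obj V) ⟶ V :=
  ModuleCat.ofHom (X := (restrictScalars f).obj ((extendScalars f).obj V))
    { toFun := F.counitAddHom V
      map_add' := (F.counitAddHom V).map_add
      map_smul' := F.counitAddHom_smul V }

lemma map_counitApp_tmulRestrict (V : ModuleCat.{max v u₂} R) (s : S)
    (x : (extendScalars f).obj V) :
    (extendScalars f).map (F.counitApp V) (tmulRestrict f ((extendScalars f).obj V) s x) =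
      tmulHom f V s (F.counitAddHom V x) :=
  rfl

lemma counitAddHom_tmulRestrict (M : ModuleCat.{max v u₂} S) (s : S) (m : M) :
    F.counitAddHom ((restrictScalars f).obj M) (tmulRestrict f M s m) = f (F.form s) • m :=
  rfl

lemma counitAddHom_map {V W : ModuleCat.{max v u₂} R} (g : V ⟶ W) (x : (extendScalars f).obj V) :
    F.counitAddHom W ((extendScalars f).map g x) = g (F.counitAddHom V x) := by
  induction x using induction_tmulHom with
  | tmul s x => rw [map_tmulHom, counitAddHom_tmulHom, counitAddHom_tmulHom, map_smul]
  | add x y hx hy => rw [map_add, map_add, map_add, map_add, hx, hy]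

lemma map_unitApp {M N : ModuleCat.{max v u₂} S} (g : M ⟶ N) (m : M) :
    (extendScalars f).map ((restrictScalars f).map g) (F.unitApp M m) = F.unitApp N (g m) := by
  rw [unitApp_apply, unitApp_apply, map_sum]
  refine Finset.sum_congr rfl fun i _ => ?_
  rw [map_restrictScalars_tmulRestrict, map_smul]

lemma counitAddHom_unitApp (M : ModuleCat.{max v u₂} S) (m : M) :
    F.counitAddHom ((restrictScalars f).obj M) (F.unitApp M m) = m := by
  rw [unitApp_apply, map_sum]
  calc
    _ = ∑ i, (f (F.form (1 * F.left i)) * F.right i) • m :=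
      Finset.sum_congr rfl fun i _ => by
        rw [counitAddHom_tmulRestrict, one_mul, mul_smul]
    _ = m := by rw [← Finset.sum_smul, F.sum_form_left, one_smul]

lemma map_counitApp_unitApp (V : ModuleCat.{max v u₂} R) (x : (extendScalars f).obj V) :
    (extendScalars f).map (F.counitApp V) (F.unitApp ((extendScalars f).obj V) x) = x := by
  induction x using induction_tmulHom with
  | tmul s x =>
    rw [unitApp_apply, map_sum]
    calc
      _ = ∑ i, tmulHom f V (f (F.form (s * F.right i)) * F.left i) x :=
        Finset.sum_congr rfl fun i _ => by
          rw [map_counitApp_tmulRestrict, smul_tmulHom, counitAddHom_tmulHom, tmulHom_map_mul,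
            mul_comm s]
      _ = tmulHom f V s x := by
        rw [← AddMonoidHom.finsetSum_apply, ← map_sum, F.sum_form_right]
  | add x y hx hy => rw [map_add, map_add, hx, hy]

/-- A Frobenius system makes restriction of scalars left adjoint to extension of scalars. -/
noncomputable def restrictExtendScalarsAdj :
    restrictScalars.{max v u₂} f ⊣ extendScalars.{u₁, u₂, max v u₂} f where
  unit :=
    { app M := F.unitApp M
      naturality _ _ g := ModuleCat.hom_ext <| LinearMap.ext fun m => (F.map_unitApp g m).symm }
  counit :=
    { app V := F.counitApp V
      naturality _ _ g := ModuleCat.hom_ext <| LinearMap.ext fun x => F.counitAddHom_map g x }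
  left_triangle_components M :=
    ModuleCat.hom_ext <| LinearMap.ext fun m => F.counitAddHom_unitApp M m
  right_triangle_components V :=
    ModuleCat.hom_ext <| LinearMap.ext fun x => F.map_counitApp_unitApp V x

end FrobeniusSystem

namespace DualNum

/-- The class `ε` of `X` in `ℂ[X]/(X²)`. -/
noncomputable def eps : DualNum := Ideal.Quotient.mk _ Polynomial.X

lemma eps_mul_eps : eps * eps = 0 := by
  rw [eps, ← map_mul, ← pow_two, Ideal.Quotient.eq_zero_iff_mem]
  exact Ideal.subset_span rfl

/-- The coefficient of `ε`. -/
noncomputable def epsCoeff : DualNum →ₗ[ℂ] ℂ :=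
  Polynomial.lcoeff ℂ 1 ∘ₗ AdjoinRoot.modByMonicHom (Polynomial.monic_X_pow 2)

lemma epsCoeff_mk (p : Polynomial ℂ) : epsCoeff (Ideal.Quotient.mk _ p) = p.coeff 1 := by
  change (p %ₘ (Polynomial.X ^ 2)).coeff 1 = p.coeff 1
  conv_rhs => rw [← Polynomial.modByMonic_add_div p (Polynomial.X ^ 2)]
  simp [Polynomial.coeff_X_pow_mul']

lemma exists_eq_add_mul_eps (s : DualNum) :
    ∃ a b : ℂ, s = algebraMap ℂ DualNum a + algebraMap ℂ DualNum b * eps := by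
  obtain ⟨p, rfl⟩ := Ideal.Quotient.mk_surjective s
  refine ⟨p.coeff 0, p.coeff 1, ?_⟩
  change _ = Ideal.Quotient.mk _ (Polynomial.C _) +
    Ideal.Quotient.mk _ (Polynomial.C _) * Ideal.Quotient.mk _ Polynomial.X
  rw [← map_mul, ← map_add, Ideal.Quotient.mk_eq_mk_iff_sub_mem, Ideal.mem_span_singleton,
    Polynomial.X_pow_dvd_iff]
  intro d hd
  interval_cases d <;> simp

lemma epsCoeff_add_mul_eps (a b : ℂ) :
    epsCoeff (algebraMap ℂ DualNum a + algebraMap ℂ DualNum b * eps) = b := by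
  change epsCoeff (Ideal.Quotient.mk _ (Polynomial.C a + Polynomial.C b * Polynomial.X)) = b
  rw [epsCoeff_mk]
  simp

lemma epsCoeff_add_epsCoeff_mul_eps (s : DualNum) :
    algebraMap ℂ DualNum (epsCoeff (s * eps)) + algebraMap ℂ DualNum (epsCoeff s) * eps = s := by
  obtain ⟨a, b, rfl⟩ := exists_eq_add_mul_eps s
  have mul_eps : (algebraMap ℂ DualNum a + algebraMap ℂ DualNum b * eps) * eps =
      algebraMap ℂ DualNum 0 + algebraMap ℂ DualNum a * eps := by
    rw [add_mul, mul_assoc, eps_mul_eps, mul_zero, add_zero, map_zero, zero_add]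
  rw [mul_eps, epsCoeff_add_mul_eps, epsCoeff_add_mul_eps]

/-- The Frobenius system on `ℂ[X]/(X²)` whose form is the coefficient of `ε`. -/
noncomputable def frobeniusSystem : FrobeniusSystem (algebraMap ℂ DualNum) (Fin 2) where
  form := epsCoeff.toAddMonoidHom
  form_map_mul r s := by
    rw [← Algebra.smul_def]
    exact epsCoeff.map_smul r s
  left := ![1, eps]
  right := ![eps, 1]
  sum_form_left s := by
    simpa [add_comm] using epsCoeff_add_epsCoeff_mul_eps s
  sum_form_right s := by
    simpa using epsCoeff_add_epsCoeff_mul_eps s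

end DualNum

/-- For the dual numbers `D = ℂ[X]/(X²)` with structure map
`φ = algebraMap ℂ D`, the restriction of scalars functor `ModuleCat D ⥤ ModuleCat ℂ`
along `φ` is left adjoint to the extension of scalars functor
`ModuleCat ℂ ⥤ ModuleCat D`, `V ↦ D ⊗_ℂ V`. -/
theorem restrictScalars_leftAdjoint_extendScalars_dualNumbers :
    Nonempty
      (ModuleCat.restrictScalars (algebraMap ℂ DualNum) ⊣
        ModuleCat.extendScalars (algebraMap ℂ DualNum)) := by
  exact ⟨DualNum.frobeniusSystem.restrictExtendScalarsAdj⟩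
end
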